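/- arXiv:1907.02132 — 2 statements merged into one kernel-verified Lean document; each statement's English description precedes it below -/
import Mathlib

section
/- The function d_α : I_α × I_α → [0,∞) is a metric on I_α: it is nonnegative, symmetric, vanishes precisely when the two interval partitions are equal, and satisfies the triangle inequality. -/
/-!
A correspondence is determined by its finite set of pairs, since listing the pairs by left endpoint
recovers the sequence; `Close a β γ S r` says that the correspondence with set of pairs `S` has
distortion at most `r`, and `Close.dA_le` and `exists_close` express `dA` in these terms.

Nonnegativity and symmetry are immediate. For the triangle inequality, compose a correspondence
`β → η` with one `η → γ` along their common blocks of `η` (`Close.comp`). The only delicate point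
is the mass lost by dropping the pairs `(U, V)` whose `V` is unmatched by the second correspondence:
`Leb U ≤ |Leb U - Leb V| + Leb V`, and these `V` have total mass at most what the second
correspondence leaves uncovered in `η`.

`dA a β β = 0` because finitely many blocks carry almost all the mass. Conversely, suppose
`dA a β γ = 0`. The lengths agree, and a block of `β` heavier than the distortion `r` must be
matched, with a block of `γ` whose endpoints differ by at most `2 r` (`Close.left_le`). As `r → 0`
these blocks of `γ` eventually all contain the midpoint of the given block, so they are one and the
same block, equal to the given one.
-/

open MeasureTheory Filter Topology Set

/-- An interval partition of `[0, L]`: a set of disjoint open subintervals whose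
complement in `[0, L]` is Lebesgue-null. A block is encoded by its endpoint pair
`(a, b)` with `a < b`, representing the open interval `(a, b)`. -/
structure IntervalPartition where
  length : ℝ
  length_nonneg : 0 ≤ length
  blocks : Set (ℝ × ℝ)
  blocks_lt : ∀ p ∈ blocks, p.1 < p.2
  blocks_sub : ∀ p ∈ blocks, 0 ≤ p.1 ∧ p.2 ≤ length
  blocks_disjoint : ∀ p ∈ blocks, ∀ q ∈ blocks, p ≠ q →
    Set.Ioo p.1 p.2 ∩ Set.Ioo q.1 q.2 = ∅
  compl_null : volume (Set.Icc 0 length \ ⋃ p ∈ blocks, Set.Ioo p.1 p.2) = 0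

namespace IntervalPartition

/-- The mass (Lebesgue measure) of a block `(a, b)`. -/
def mass (p : ℝ × ℝ) : ℝ := p.2 - p.1

/-- The complement `C_β = [0, ‖β‖] \ ⋃_{U ∈ β} U`. -/
def cset (β : IntervalPartition) : Set ℝ :=
  Set.Icc 0 β.length \ ⋃ p ∈ β.blocks, Set.Ioo p.1 p.2

/-- A correspondence between `β` and `γ`: a finite sequence of pairs of blocks,
strictly increasing in the left-to-right order in each coordinate. -/
def IsCorrespondence (β γ : IntervalPartition) (n : ℕ)
    (c : Fin n → (ℝ × ℝ) × (ℝ × ℝ)) : Prop :=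
  (∀ j, (c j).1 ∈ β.blocks ∧ (c j).2 ∈ γ.blocks) ∧
  (∀ j k : Fin n, j < k → (c j).1.2 ≤ (c k).1.1 ∧ (c j).2.2 ≤ (c k).2.1)

/-- The Hausdorff distortion of a correspondence: the maximum of quantities
(i) and (ii) of the paper. -/
noncomputable def hausDistortion (β γ : IntervalPartition) (n : ℕ)
    (c : Fin n → (ℝ × ℝ) × (ℝ × ℝ)) : ℝ :=
  max ((∑ j : Fin n, |mass (c j).1 - mass (c j).2|) + β.length - ∑ j : Fin n, mass (c j).1)
      ((∑ j : Fin n, |mass (c j).1 - mass (c j).2|) + γ.length - ∑ j : Fin n, mass (c j).2)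

/-- The metric `d_H'`: infimum of the Hausdorff distortion over all correspondences. -/
noncomputable def dHp (β γ : IntervalPartition) : ℝ :=
  sInf {x | ∃ n, ∃ c : Fin n → (ℝ × ℝ) × (ℝ × ℝ),
    IsCorrespondence β γ n c ∧ x = hausDistortion β γ n c}

/-- The metric `d_H`: the Hausdorff distance between the complements. -/
noncomputable def dH (β γ : IntervalPartition) : ℝ :=
  Metric.hausdorffDist β.cset γ.cset

/-- The number of blocks of mass `> h` ending at or before `t`. -/
noncomputable def divCount (β : IntervalPartition) (t h : ℝ) : ℕ :=
  Set.ncard {p : ℝ × ℝ | p ∈ β.blocks ∧ h < p.2 - p.1 ∧ p.2 ≤ t}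

/-- `β` has `a`-diversity `d` at `t`:
`Γ(1-a) · lim_{h↓0} h^a · #{(x,y) ∈ β : y - x > h, y ≤ t} = d`. -/
def HasDiversity (a : ℝ) (β : IntervalPartition) (t d : ℝ) : Prop :=
  Tendsto (fun h : ℝ => Real.Gamma (1 - a) * h ^ a * (divCount β t h : ℝ))
    (𝓝[>] 0) (𝓝 d)

/-- The `a`-diversity property: the diversity limit exists at every `t ∈ [0, ‖β‖]`. -/
def HasDiversityProp (a : ℝ) (β : IntervalPartition) : Prop :=
  ∀ t ∈ Set.Icc 0 β.length, ∃ d, HasDiversity a β t d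

/-- The diversity function `𝒟_β(t)` (the value of the limit, when it exists). -/
noncomputable def diversity (a : ℝ) (β : IntervalPartition) (t : ℝ) : ℝ :=
  limUnder (𝓝[>] (0:ℝ)) (fun h : ℝ => Real.Gamma (1 - a) * h ^ a * (divCount β t h : ℝ))

/-- The total diversity `𝒟_β(∞) = 𝒟_β(‖β‖)`. -/
noncomputable def totalDiversity (a : ℝ) (β : IntervalPartition) : ℝ :=
  diversity a β β.length

/-- The diversity `𝒟_β(U)` of a block `U`, evaluated at its midpoint. -/
noncomputable def blockDiversity (a : ℝ) (β : IntervalPartition) (p : ℝ × ℝ) : ℝ :=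
  diversity a β ((p.1 + p.2) / 2)

/-- The `a`-distortion of a correspondence: the maximum of quantities (i)-(iv). -/
noncomputable def alphaDistortion (a : ℝ) (β γ : IntervalPartition) (n : ℕ)
    (c : Fin n → (ℝ × ℝ) × (ℝ × ℝ)) : ℝ :=
  max (hausDistortion β γ n c)
    (max (⨆ j : Fin n, |blockDiversity a β (c j).1 - blockDiversity a γ (c j).2|)
         |totalDiversity a β - totalDiversity a γ|)

/-- The metric `d_α`: infimum of the `a`-distortion over all correspondences. -/
noncomputable def dA (a : ℝ) (β γ : IntervalPartition) : ℝ :=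
  sInf {x | ∃ n, ∃ c : Fin n → (ℝ × ℝ) × (ℝ × ℝ),
    IsCorrespondence β γ n c ∧ x = alphaDistortion a β γ n c}

end IntervalPartition

/-- A point of the space `J`: an interval partition `η` together with an increasing,
right-continuous function `f` that is constant on every block of `η`, on `[‖η‖, ∞)`,
and (as `f` is defined on `[0, ∞]`) on `(-∞, 0]`. -/
structure JPoint where
  part : IntervalPartition
  f : ℝ → ℝ
  f_nonneg : ∀ t, 0 ≤ f t
  f_mono : Monotone f
  f_rightCont : ∀ t, ContinuousWithinAt f (Set.Ici t) t
  f_const_block : ∀ p ∈ part.blocks, ∀ s ∈ Set.Ioo p.1 p.2, ∀ t ∈ Set.Ioo p.1 p.2, f s = f t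
  f_const_top : ∀ t, part.length ≤ t → f t = f part.length
  f_const_neg : ∀ t, t ≤ (0:ℝ) → f t = f 0

/-- The distortion of a correspondence between two points of `J`: as the
`a`-distortion, but with `f`, `g` in place of the diversity functions. -/
noncomputable def jDistortion (x y : JPoint) (n : ℕ)
    (c : Fin n → (ℝ × ℝ) × (ℝ × ℝ)) : ℝ :=
  max (IntervalPartition.hausDistortion x.part y.part n c)
    (max (⨆ j : Fin n, |x.f (((c j).1.1 + (c j).1.2) / 2) - y.f (((c j).2.1 + (c j).2.2) / 2)|)
         |x.f x.part.length - y.f y.part.length|)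

/-- The metric `d_J` on `J`. -/
noncomputable def dJ (x y : JPoint) : ℝ :=
  sInf {r | ∃ n, ∃ c : Fin n → (ℝ × ℝ) × (ℝ × ℝ),
    IntervalPartition.IsCorrespondence x.part y.part n c ∧ r = jDistortion x y n c}

namespace IntervalPartition

/-! ### Masses of finite families of blocks -/

lemma mass_pos {β : IntervalPartition} {p : ℝ × ℝ} (hp : p ∈ β.blocks) : 0 < mass p :=
  sub_pos.2 (β.blocks_lt p hp)

/-- Two distinct blocks are comparable in the left-to-right order. -/
lemma blocks_order {β : IntervalPartition} {p q : ℝ × ℝ} (hp : p ∈ β.blocks)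
    (hq : q ∈ β.blocks) (hpq : p ≠ q) : p.2 ≤ q.1 ∨ q.2 ≤ p.1 := by
  have h := β.blocks_disjoint p hp q hq hpq
  have h1 := β.blocks_lt p hp
  have h2 := β.blocks_lt q hq
  rw [Set.Ioo_inter_Ioo, Set.Ioo_eq_empty_iff] at h
  rcases le_total p.1 q.1 with h3 | h3 <;> rcases le_total p.2 q.2 with h4 | h4 <;>
    simp only [h3, h4, sup_of_le_left, sup_of_le_right, inf_of_le_left, inf_of_le_right,
      not_lt] at h
  · exact Or.inl h
  · linarith
  · linarith
  · exact Or.inr h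

lemma pairwiseDisjoint_blocks (β : IntervalPartition) :
    β.blocks.PairwiseDisjoint (fun p : ℝ × ℝ => Set.Ioo p.1 p.2) := by
  intro p hp q hq hpq
  exact Set.disjoint_iff_inter_eq_empty.2 (β.blocks_disjoint p hp q hq hpq)

/-- Finitely many blocks inside `[u, v]` have total mass at most `v - u`. -/
lemma sum_mass_le {β : IntervalPartition} {F : Finset (ℝ × ℝ)} {u v : ℝ} (huv : u ≤ v)
    (hF : ∀ p ∈ F, p ∈ β.blocks ∧ u ≤ p.1 ∧ p.2 ≤ v) : ∑ p ∈ F, mass p ≤ v - u := by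
  have hU : volume (⋃ p ∈ F, Set.Ioo p.1 p.2) = ∑ p ∈ F, volume (Set.Ioo p.1 p.2) :=
    measure_biUnion_finset
      (β.pairwiseDisjoint_blocks.subset (fun p hp => (hF p hp).1))
      (fun _ _ => measurableSet_Ioo)
  have hle : volume (⋃ p ∈ F, Set.Ioo p.1 p.2) ≤ volume (Set.Icc u v) := by
    apply measure_mono
    simp only [Set.iUnion_subset_iff]
    intro p hp x hx
    exact ⟨(hF p hp).2.1.trans hx.1.le, hx.2.le.trans (hF p hp).2.2⟩
  rw [hU] at hle
  simp only [Real.volume_Ioo, Real.volume_Icc] at hle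
  rw [← ENNReal.ofReal_sum_of_nonneg (f := fun p : ℝ × ℝ => p.2 - p.1)
    (fun p hp => (mass_pos (hF p hp).1).le)] at hle
  exact (ENNReal.ofReal_le_ofReal_iff (sub_nonneg.2 huv)).1 hle

lemma sum_mass_le_length {β : IntervalPartition} {F : Finset (ℝ × ℝ)}
    (hF : ∀ p ∈ F, p ∈ β.blocks) : ∑ p ∈ F, mass p ≤ β.length := by
  simpa using sum_mass_le β.length_nonneg
    (fun p hp => ⟨hF p hp, β.blocks_sub p (hF p hp)⟩)

/-- Finitely many blocks exhaust the length up to any prescribed error: the complement of the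
blocks is null and there are only countably many of them. -/
lemma exists_finset_mass (β : IntervalPartition) {ε : ℝ} (hε : 0 < ε) :
    ∃ F : Finset (ℝ × ℝ), (∀ p ∈ F, p ∈ β.blocks) ∧ β.length - ε ≤ ∑ p ∈ F, mass p := by
  rcases β.length_nonneg.eq_or_lt with h0 | h0
  · exact ⟨∅, by simp, by simp; linarith⟩
  have hc : β.blocks.Countable := by
    apply β.pairwiseDisjoint_blocks.countable_of_isOpen (fun _ _ => isOpen_Ioo)
    intro p hp
    exact Set.nonempty_Ioo.2 (β.blocks_lt p hp)
  have hU : volume (⋃ p ∈ β.blocks, Set.Ioo p.1 p.2)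
      = ∑' p : β.blocks, volume (Set.Ioo p.1.1 p.1.2) :=
    measure_biUnion hc β.pairwiseDisjoint_blocks (fun _ _ => measurableSet_Ioo)
  have hle : ENNReal.ofReal β.length ≤ ∑' p : β.blocks, volume (Set.Ioo p.1.1 p.1.2) := by
    have h1 : volume (Set.Icc 0 β.length) ≤
        volume (Set.Icc 0 β.length \ ⋃ p ∈ β.blocks, Set.Ioo p.1 p.2) +
          volume (⋃ p ∈ β.blocks, Set.Ioo p.1 p.2) := by
      refine (measure_mono ?_).trans (measure_union_le _ _)
      rw [Set.sdiff_union_self]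
      exact Set.subset_union_left
    rw [β.compl_null, zero_add, hU] at h1
    simpa using h1
  have hlt : ENNReal.ofReal (β.length - ε) < ∑' p : β.blocks, volume (Set.Ioo p.1.1 p.1.2) :=
    lt_of_lt_of_le ((ENNReal.ofReal_lt_ofReal_iff h0).2 (by linarith)) hle
  rw [ENNReal.tsum_eq_iSup_sum, lt_iSup_iff] at hlt
  obtain ⟨F, hF⟩ := hlt
  refine ⟨F.map (Function.Embedding.subtype _), ?_, ?_⟩
  · intro p hp
    obtain ⟨q, _, rfl⟩ := Finset.mem_map.1 hp
    exact q.2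
  · rw [Finset.sum_map]
    simp only [Real.volume_Ioo] at hF
    rw [← ENNReal.ofReal_sum_of_nonneg (f := fun p : β.blocks => p.1.2 - p.1.1)
      (fun p _ => (mass_pos p.2).le)] at hF
    exact (ENNReal.ofReal_lt_ofReal_iff'.1 hF).1.le

/-! ### Correspondences as finite sets of pairs -/

/-- A correspondence between `β` and `γ`, encoded by its set `S` of pairs of blocks: any two
distinct pairs are strictly ordered, in the same direction in both coordinates. -/
def IsCorrSet (β γ : IntervalPartition) (S : Finset ((ℝ × ℝ) × (ℝ × ℝ))) : Prop :=
  (∀ x ∈ S, x.1 ∈ β.blocks ∧ x.2 ∈ γ.blocks) ∧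
  (∀ x ∈ S, ∀ y ∈ S, x ≠ y →
    (x.1.2 ≤ y.1.1 ∧ x.2.2 ≤ y.2.1) ∨ (y.1.2 ≤ x.1.1 ∧ y.2.2 ≤ x.2.1))

/-- The correspondence with set of pairs `S` has `a`-distortion at most `r`. -/
structure Close (a : ℝ) (β γ : IntervalPartition) (S : Finset ((ℝ × ℝ) × (ℝ × ℝ)))
    (r : ℝ) : Prop where
  corr : IsCorrSet β γ S
  left : ∑ x ∈ S, |mass x.1 - mass x.2| + β.length ≤ r + ∑ x ∈ S, mass x.1
  right : ∑ x ∈ S, |mass x.1 - mass x.2| + γ.length ≤ r + ∑ x ∈ S, mass x.2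
  block : ∀ x ∈ S, |blockDiversity a β x.1 - blockDiversity a γ x.2| ≤ r
  total : |totalDiversity a β - totalDiversity a γ| ≤ r

lemma IsCorrSet.injOn_fst {β γ : IntervalPartition} {S : Finset ((ℝ × ℝ) × (ℝ × ℝ))}
    (h : IsCorrSet β γ S) : Set.InjOn Prod.fst (S : Set ((ℝ × ℝ) × (ℝ × ℝ))) := by
  intro x hx y hy hxy
  by_contra hne
  have h1 := β.blocks_lt _ (h.1 x hx).1
  have h2 := h.2 x hx y hy hne
  rw [hxy] at h1 h2
  rcases h2 with h2 | h2 <;> linarith [h2.1]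

lemma IsCorrSet.injOn_snd {β γ : IntervalPartition} {S : Finset ((ℝ × ℝ) × (ℝ × ℝ))}
    (h : IsCorrSet β γ S) : Set.InjOn Prod.snd (S : Set ((ℝ × ℝ) × (ℝ × ℝ))) := by
  intro x hx y hy hxy
  by_contra hne
  have h1 := γ.blocks_lt _ (h.1 x hx).2
  have h2 := h.2 x hx y hy hne
  rw [hxy] at h1 h2
  rcases h2 with h2 | h2 <;> linarith [h2.2]

lemma Close.nonneg {a r : ℝ} {β γ : IntervalPartition} {S : Finset ((ℝ × ℝ) × (ℝ × ℝ))}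
    (h : Close a β γ S r) : 0 ≤ r :=
  (abs_nonneg _).trans h.total

lemma Close.swap {a r : ℝ} {β γ : IntervalPartition} {S : Finset ((ℝ × ℝ) × (ℝ × ℝ))}
    (h : Close a β γ S r) : Close a γ β (S.image Prod.swap) r := by
  have hs : ∀ f : (ℝ × ℝ) × (ℝ × ℝ) → ℝ,
      ∑ x ∈ S.image Prod.swap, f x = ∑ x ∈ S, f x.swap := fun f =>
    Finset.sum_image Prod.swap_injective.injOn
  refine ⟨⟨?_, ?_⟩, ?_, ?_, ?_, ?_⟩
  · simp only [Finset.forall_mem_image]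
    exact fun x hx => (h.corr.1 x hx).symm
  · simp only [Finset.forall_mem_image]
    intro x hx y hy hne
    have := h.corr.2 x hx y hy (fun e => hne (e ▸ rfl))
    exact this.imp And.symm And.symm
  · simpa [hs, abs_sub_comm] using h.right
  · simpa [hs, abs_sub_comm] using h.left
  · simp only [Finset.forall_mem_image]
    intro x hx
    rw [abs_sub_comm]
    exact h.block x hx
  · rw [abs_sub_comm]
    exact h.total

lemma alphaDistortion_nonneg (a : ℝ) (β γ : IntervalPartition) (n : ℕ)
    (c : Fin n → (ℝ × ℝ) × (ℝ × ℝ)) : 0 ≤ alphaDistortion a β γ n c :=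
  (abs_nonneg _).trans ((le_max_right _ _).trans (le_max_right _ _))

lemma dA_bddBelow (a : ℝ) (β γ : IntervalPartition) :
    BddBelow {x | ∃ n, ∃ c : Fin n → (ℝ × ℝ) × (ℝ × ℝ),
      IsCorrespondence β γ n c ∧ x = alphaDistortion a β γ n c} :=
  ⟨0, by rintro x ⟨n, c, _, rfl⟩; exact alphaDistortion_nonneg a β γ n c⟩

lemma dA_nonneg (a : ℝ) (β γ : IntervalPartition) : 0 ≤ dA a β γ :=
  Real.sInf_nonneg (by rintro x ⟨n, c, _, rfl⟩; exact alphaDistortion_nonneg a β γ n c)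

/-- Listing a set of pairs by increasing left endpoint gives a correspondence in the sense of
finite sequences. -/
lemma Close.dA_le {a r : ℝ} {β γ : IntervalPartition} {S : Finset ((ℝ × ℝ) × (ℝ × ℝ))}
    (h : Close a β γ S r) : dA a β γ ≤ r := by
  set T : Finset ℝ := S.image (fun x => x.1.1) with hT
  have hex : ∀ j : Fin T.card, ∃ x ∈ S, x.1.1 = T.orderEmbOfFin rfl j := fun j =>
    Finset.mem_image.1 (T.orderEmbOfFin_mem rfl j)
  choose c hcS hc using hex
  have hlt : ∀ j k, j < k → (c j).1.1 < (c k).1.1 := fun j k hjk => by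
    rw [hc, hc]
    exact (T.orderEmbOfFin rfl).strictMono hjk
  have hinj : Function.Injective c := by
    intro j k hjk
    by_contra hne
    rcases lt_or_gt_of_ne hne with h1 | h1
    · exact (hlt _ _ h1).ne (by rw [hjk])
    · exact (hlt _ _ h1).ne (by rw [hjk])
  have himg : Finset.univ.image c = S := by
    ext x
    simp only [Finset.mem_image, Finset.mem_univ, true_and]
    refine ⟨fun ⟨j, hj⟩ => hj ▸ hcS j, fun hx => ?_⟩
    have hxT : x.1.1 ∈ Set.range (T.orderEmbOfFin rfl) := by
      rw [Finset.range_orderEmbOfFin]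
      exact Finset.mem_coe.2 (Finset.mem_image_of_mem _ hx)
    obtain ⟨j, hj⟩ := hxT
    refine ⟨j, ?_⟩
    by_contra hne
    have h1 := h.corr.2 _ (hcS j) x hx hne
    have h2 := β.blocks_lt _ (h.corr.1 x hx).1
    have h3 := β.blocks_lt _ (h.corr.1 _ (hcS j)).1
    have h4 := hc j
    rcases h1 with h1 | h1 <;> linarith [h1.1]
  have hsum : ∀ f : (ℝ × ℝ) × (ℝ × ℝ) → ℝ, ∑ j, f (c j) = ∑ x ∈ S, f x := fun f => by
    rw [← himg, Finset.sum_image hinj.injOn]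
  refine (csInf_le (dA_bddBelow a β γ) ⟨T.card, c, ⟨fun j => h.corr.1 _ (hcS j), ?_⟩, rfl⟩).trans
    ?_
  · intro j k hjk
    have h1 := hlt j k hjk
    have h2 := β.blocks_lt _ (h.corr.1 _ (hcS k)).1
    rcases h.corr.2 _ (hcS j) _ (hcS k) (fun e => h1.ne (by rw [e])) with h3 | h3
    · exact h3
    · linarith [h3.1]
  · refine max_le (max_le ?_ ?_) (max_le ?_ h.total)
    · rw [hsum (fun x => |mass x.1 - mass x.2|), hsum (fun x => mass x.1)]
      linarith [h.left]
    · rw [hsum (fun x => |mass x.1 - mass x.2|), hsum (fun x => mass x.2)]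
      linarith [h.right]
    · exact Real.iSup_le (fun j => h.block _ (hcS j)) h.nonneg

lemma exists_close {a r : ℝ} {β γ : IntervalPartition} (h : dA a β γ < r) :
    ∃ S, Close a β γ S r := by
  have hne : {x | ∃ n, ∃ c : Fin n → (ℝ × ℝ) × (ℝ × ℝ),
      IsCorrespondence β γ n c ∧ x = alphaDistortion a β γ n c}.Nonempty :=
    ⟨_, 0, Fin.elim0, ⟨fun j => j.elim0, fun j => j.elim0⟩, rfl⟩
  obtain ⟨_, ⟨n, c, hc, rfl⟩, hr⟩ := exists_lt_of_csInf_lt hne h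
  have hr := hr.le
  obtain ⟨h1, h2⟩ := max_le_iff.1 hr
  obtain ⟨hl, hrt⟩ := max_le_iff.1 h1
  obtain ⟨hb, ht⟩ := max_le_iff.1 h2
  have hinj : Function.Injective c := by
    have key : ∀ j k, j < k → c j ≠ c k := fun j k hjk e => by
      have h3 := (hc.2 j k hjk).1
      have h4 := β.blocks_lt _ (hc.1 k).1
      rw [e] at h3
      linarith
    intro j k hjk
    by_contra hne
    rcases lt_or_gt_of_ne hne with h3 | h3
    · exact key _ _ h3 hjk
    · exact key _ _ h3 hjk.symm
  have hsum : ∀ f : (ℝ × ℝ) × (ℝ × ℝ) → ℝ,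
      ∑ x ∈ Finset.univ.image c, f x = ∑ j, f (c j) := fun f =>
    Finset.sum_image hinj.injOn
  refine ⟨Finset.univ.image c, ⟨?_, ?_⟩, ?_, ?_, ?_, ht⟩
  · simp only [Finset.forall_mem_image]
    exact fun j _ => hc.1 j
  · simp only [Finset.forall_mem_image]
    intro j _ k _ hne
    rcases lt_trichotomy j k with h3 | h3 | h3
    · exact Or.inl (hc.2 j k h3)
    · exact absurd (by rw [h3]) hne
    · exact Or.inr (hc.2 k j h3)
  · rw [hsum, hsum]
    linarith
  · rw [hsum, hsum]
    linarith
  · simp only [Finset.forall_mem_image]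
    intro j _
    exact (le_ciSup (f := fun j => |blockDiversity a β (c j).1 - blockDiversity a γ (c j).2|)
      (Set.finite_range _).bddAbove j).trans hb

/-! ### Triangle inequality -/

/-- The mass estimate for a composition. The finite family `P` is embedded by `f` and `g` in
`S` and `S'`, which carry weights `(u, v)` and `(v', w)` with common value `v = v'` on `P`. Since
the part of `S` missed by `P` and the whole of `S'` have joint middle weight at most `M`, the mass
lost by restricting `S` to `P` is paid for by the mass that `S'` leaves uncovered. -/
lemma comp_bound {ι X Y : Type*} [DecidableEq X] (P : Finset ι) (S : Finset X) (S' : Finset Y)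
    (f : ι → X) (g : ι → Y) (hf : Set.InjOn f (P : Set ι)) (hg : Set.InjOn g (P : Set ι))
    (hfS : ∀ i ∈ P, f i ∈ S) (hgS : ∀ i ∈ P, g i ∈ S')
    (u v : X → ℝ) (v' w : Y → ℝ) (huv : ∀ i ∈ P, v (f i) = v' (g i)) {L M r r' : ℝ}
    (hM : ∑ x ∈ S \ P.image f, v x + ∑ y ∈ S', v' y ≤ M)
    (h : ∑ x ∈ S, |u x - v x| + L ≤ r + ∑ x ∈ S, u x)
    (h' : ∑ y ∈ S', |v' y - w y| + M ≤ r' + ∑ y ∈ S', v' y) :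
    ∑ i ∈ P, |u (f i) - w (g i)| + L ≤ r + r' + ∑ i ∈ P, u (f i) := by
  classical
  have hsub : P.image f ⊆ S := Finset.image_subset_iff.2 hfS
  have hsub' : P.image g ⊆ S' := Finset.image_subset_iff.2 hgS
  have e1 := Finset.sum_sdiff (f := fun x => |u x - v x|) hsub
  have e2 := Finset.sum_sdiff (f := u) hsub
  rw [Finset.sum_image hf] at e1 e2
  have b1 : ∑ i ∈ P, |v' (g i) - w (g i)| ≤ ∑ y ∈ S', |v' y - w y| := by
    rw [← Finset.sum_image (f := fun y => |v' y - w y|) hg]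
    exact Finset.sum_le_sum_of_subset_of_nonneg hsub' (fun _ _ _ => abs_nonneg _)
  have b2 : ∑ i ∈ P, |u (f i) - w (g i)| ≤
      ∑ i ∈ P, |u (f i) - v (f i)| + ∑ i ∈ P, |v' (g i) - w (g i)| := by
    rw [← Finset.sum_add_distrib]
    refine Finset.sum_le_sum fun i hi => ?_
    rw [← huv i hi]
    exact abs_sub_le _ _ _
  have b3 : ∑ x ∈ S \ P.image f, u x ≤
      ∑ x ∈ S \ P.image f, |u x - v x| + ∑ x ∈ S \ P.image f, v x := by
    rw [← Finset.sum_add_distrib]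
    exact Finset.sum_le_sum fun x _ => by linarith [le_abs_self (u x - v x)]
  linarith

/-- Two finite families of blocks of `η` without a common block have total mass at most the
length of `η`. -/
lemma sum_add_sum_le {η : IntervalPartition} {X Y : Type*} (T : Finset X) (S' : Finset Y)
    (v : X → ℝ × ℝ) (v' : Y → ℝ × ℝ) (hv : Set.InjOn v (T : Set X))
    (hv' : Set.InjOn v' (S' : Set Y)) (hT : ∀ x ∈ T, v x ∈ η.blocks)
    (hS : ∀ y ∈ S', v' y ∈ η.blocks) (hd : ∀ x ∈ T, ∀ y ∈ S', v x ≠ v' y) :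
    ∑ x ∈ T, mass (v x) + ∑ y ∈ S', mass (v' y) ≤ η.length := by
  classical
  rw [← Finset.sum_image (f := mass) hv, ← Finset.sum_image (f := mass) hv',
    ← Finset.sum_union]
  · refine sum_mass_le_length fun p hp => ?_
    rcases Finset.mem_union.1 hp with hp | hp <;> obtain ⟨x, hx, rfl⟩ := Finset.mem_image.1 hp
    · exact hT x hx
    · exact hS x hx
  · rw [Finset.disjoint_left]
    intro p hp hp'
    obtain ⟨x, hx, rfl⟩ := Finset.mem_image.1 hp
    obtain ⟨y, hy, hxy⟩ := Finset.mem_image.1 hp'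
    exact hd x hx y hy hxy.symm

/-- Composing two correspondences along their common blocks of `η` adds the distortions. -/
lemma Close.comp {a r r' : ℝ} {β η γ : IntervalPartition}
    {S S' : Finset ((ℝ × ℝ) × (ℝ × ℝ))} (h : Close a β η S r) (h' : Close a η γ S' r') :
    ∃ R, Close a β γ R (r + r') := by
  classical
  set P := (S ×ˢ S').filter (fun z => z.1.2 = z.2.1) with hP
  have hPm : ∀ z ∈ P, z.1 ∈ S ∧ z.2 ∈ S' ∧ z.1.2 = z.2.1 := fun z hz => by
    simpa [hP, and_assoc] using hz
  have hf : Set.InjOn Prod.fst (P : Set (((ℝ × ℝ) × (ℝ × ℝ)) × ((ℝ × ℝ) × (ℝ × ℝ)))) := by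
    intro z hz z' hz' e
    obtain ⟨_, h2, h3⟩ := hPm z hz
    obtain ⟨_, h5, h6⟩ := hPm z' hz'
    exact Prod.ext e (h'.corr.injOn_fst h2 h5 (by rw [← h3, ← h6, e]))
  have hg : Set.InjOn Prod.snd (P : Set (((ℝ × ℝ) × (ℝ × ℝ)) × ((ℝ × ℝ) × (ℝ × ℝ)))) := by
    intro z hz z' hz' e
    obtain ⟨h1, _, h3⟩ := hPm z hz
    obtain ⟨h4, _, h6⟩ := hPm z' hz'
    exact Prod.ext (h.corr.injOn_snd h1 h4 (by rw [h3, h6, e])) e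
  have hi : Set.InjOn (fun z : ((ℝ × ℝ) × (ℝ × ℝ)) × ((ℝ × ℝ) × (ℝ × ℝ)) => (z.1.1, z.2.2))
      (P : Set (((ℝ × ℝ) × (ℝ × ℝ)) × ((ℝ × ℝ) × (ℝ × ℝ)))) := by
    intro z hz z' hz' e
    exact hf hz hz' (h.corr.injOn_fst (hPm z hz).1 (hPm z' hz').1 (Prod.ext_iff.1 e).1)
  have hfS : ∀ z ∈ P, z.1 ∈ S := fun z hz => (hPm z hz).1
  have hgS : ∀ z ∈ P, z.2 ∈ S' := fun z hz => (hPm z hz).2.1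
  have hM : ∑ x ∈ S \ P.image Prod.fst, mass x.2 + ∑ y ∈ S', mass y.1 ≤ η.length := by
    apply sum_add_sum_le (S \ P.image Prod.fst) S' Prod.snd Prod.fst
      (h.corr.injOn_snd.mono (by simp)) h'.corr.injOn_fst
      (fun x hx => (h.corr.1 x (Finset.sdiff_subset hx)).2) (fun y hy => (h'.corr.1 y hy).1)
    intro x hx y hy e
    obtain ⟨hxS, hxP⟩ := Finset.mem_sdiff.1 hx
    exact hxP (Finset.mem_image.2 ⟨(x, y), by simp [hP, hxS, hy, e], rfl⟩)
  have hM' : ∑ y ∈ S' \ P.image Prod.snd, mass y.1 + ∑ x ∈ S, mass x.2 ≤ η.length := by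
    apply sum_add_sum_le (S' \ P.image Prod.snd) S Prod.fst Prod.snd
      (h'.corr.injOn_fst.mono (by simp)) h.corr.injOn_snd
      (fun x hx => (h'.corr.1 x (Finset.sdiff_subset hx)).1) (fun y hy => (h.corr.1 y hy).2)
    intro y hy x hx e
    obtain ⟨hyS, hyP⟩ := Finset.mem_sdiff.1 hy
    exact hyP (Finset.mem_image.2 ⟨(x, y), by simp [hP, hyS, hx, e], rfl⟩)
  refine ⟨P.image (fun z => (z.1.1, z.2.2)), ⟨?_, ?_⟩, ?_, ?_, ?_, ?_⟩
  · simp only [Finset.forall_mem_image]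
    exact fun z hz => ⟨(h.corr.1 _ (hfS z hz)).1, (h'.corr.1 _ (hgS z hz)).2⟩
  · simp only [Finset.forall_mem_image]
    intro z hz z' hz' hne
    have hzz : z ≠ z' := fun e => hne (by rw [e])
    have o1 := h.corr.2 _ (hfS z hz) _ (hfS z' hz') (fun e => hzz (hf hz hz' e))
    have o2 := h'.corr.2 _ (hgS z hz) _ (hgS z' hz') (fun e => hzz (hg hz hz' e))
    have l1 := η.blocks_lt _ (h.corr.1 _ (hfS z hz)).2
    have l2 := η.blocks_lt _ (h.corr.1 _ (hfS z' hz')).2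
    rw [← (hPm z hz).2.2, ← (hPm z' hz').2.2] at o2
    -- Both orders are detected on the common middle blocks, so they agree.
    rcases o1 with o1 | o1 <;> rcases o2 with o2 | o2
    · exact Or.inl ⟨o1.1, o2.2⟩
    · linarith [o1.2, o2.1]
    · linarith [o1.2, o2.1]
    · exact Or.inr ⟨o1.1, o2.2⟩
  · rw [Finset.sum_image hi, Finset.sum_image hi]
    exact comp_bound P S S' Prod.fst Prod.snd hf hg hfS hgS (fun x => mass x.1)
      (fun x => mass x.2) (fun y => mass y.1) (fun y => mass y.2)
      (fun z hz => congrArg mass (hPm z hz).2.2) hM h.left h'.left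
  · rw [Finset.sum_image hi, Finset.sum_image hi]
    have := comp_bound P S' S Prod.snd Prod.fst hg hf hgS hfS (fun y => mass y.2)
      (fun y => mass y.1) (fun x => mass x.2) (fun x => mass x.1)
      (fun z hz => congrArg mass (hPm z hz).2.2.symm) hM'
      (by simpa only [abs_sub_comm] using h'.right) (by simpa only [abs_sub_comm] using h.right)
    simp only [abs_sub_comm (mass (Prod.fst _))]
    linarith
  · simp only [Finset.forall_mem_image]
    intro z hz
    have b1 := h.block _ (hfS z hz)
    have b2 := h'.block _ (hgS z hz)
    rw [← (hPm z hz).2.2] at b2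
    exact (abs_sub_le _ _ _).trans (add_le_add b1 b2)
  · exact (abs_sub_le _ _ _).trans (add_le_add h.total h'.total)

/-! ### Vanishing of the distance -/

lemma dA_self (a : ℝ) (β : IntervalPartition) : dA a β β = 0 := by
  refine le_antisymm (le_of_forall_pos_le_add fun ε hε => ?_) (dA_nonneg a β β)
  obtain ⟨F, hF, hm⟩ := β.exists_finset_mass hε
  have hs : ∀ f : (ℝ × ℝ) × (ℝ × ℝ) → ℝ,
      ∑ x ∈ F.image (fun p => (p, p)), f x = ∑ p ∈ F, f (p, p) := fun f =>
    Finset.sum_image (fun p _ q _ e => congrArg Prod.fst e)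
  rw [zero_add]
  refine Close.dA_le (S := F.image (fun p => (p, p))) ⟨⟨?_, ?_⟩, ?_, ?_, ?_, ?_⟩
  · simp only [Finset.forall_mem_image]
    exact fun p hp => ⟨hF p hp, hF p hp⟩
  · simp only [Finset.forall_mem_image]
    intro p hp q hq hne
    exact (blocks_order (hF p hp) (hF q hq) (fun e => hne (by rw [e]))).imp
      (fun h => ⟨h, h⟩) (fun h => ⟨h, h⟩)
  · simp only [hs, sub_self, abs_zero, Finset.sum_const_zero]
    linarith
  · simp only [hs, sub_self, abs_zero, Finset.sum_const_zero]
    linarith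
  · simp only [Finset.forall_mem_image, sub_self, abs_zero]
    exact fun _ _ => hε.le
  · simp [hε.le]

lemma Close.length_le {a r : ℝ} {β γ : IntervalPartition} {S : Finset ((ℝ × ℝ) × (ℝ × ℝ))}
    (h : Close a β γ S r) : β.length ≤ γ.length + r := by
  have h1 : ∑ x ∈ S, mass x.2 ≤ γ.length := by
    rw [← Finset.sum_image (f := mass) h.corr.injOn_snd]
    refine sum_mass_le_length ?_
    simp only [Finset.forall_mem_image]
    exact fun x hx => (h.corr.1 x hx).2
  have h2 : ∑ x ∈ S, mass x.1 ≤ ∑ x ∈ S, |mass x.1 - mass x.2| + ∑ x ∈ S, mass x.2 := by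
    rw [← Finset.sum_add_distrib]
    exact Finset.sum_le_sum fun x _ => by linarith [le_abs_self (mass x.1 - mass x.2)]
  linarith [h.left]

/-- A block heavier than the distortion cannot be left out of the correspondence. -/
lemma Close.mem_of_mass {a r : ℝ} {β γ : IntervalPartition}
    {S : Finset ((ℝ × ℝ) × (ℝ × ℝ))} (h : Close a β γ S r) {p : ℝ × ℝ} (hp : p ∈ β.blocks)
    (hr : r < mass p) : ∃ x ∈ S, x.1 = p := by
  classical
  by_contra! hno
  have h1 := sum_add_sum_le (η := β) ({p} : Finset (ℝ × ℝ)) S id Prod.fst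
    Function.injective_id.injOn h.corr.injOn_fst (by simpa using hp)
    (fun y hy => (h.corr.1 y hy).1)
    (fun x hx y hy e => hno y hy (e.symm.trans (Finset.mem_singleton.1 hx)))
  have h2 : 0 ≤ ∑ x ∈ S, |mass x.1 - mass x.2| := Finset.sum_nonneg fun _ _ => abs_nonneg _
  simp only [Finset.sum_singleton, id] at h1
  linarith [h.left]

/-- Matched blocks have nearly equal left endpoints: up to the distortion, what lies to the left
of a block is the total mass of the matched blocks to its left. -/
lemma Close.left_le {a r : ℝ} {β γ : IntervalPartition} {S : Finset ((ℝ × ℝ) × (ℝ × ℝ))}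
    (h : Close a β γ S r) {x : (ℝ × ℝ) × (ℝ × ℝ)} (hx : x ∈ S) : x.1.1 ≤ x.2.1 + r := by
  classical
  have hxb := h.corr.1 x hx
  set A := S.filter (fun y => y.1.2 ≤ x.1.1) with hA
  have hAS : A ⊆ S := Finset.filter_subset _ _
  have hpos := β.blocks_lt _ hxb.1
  -- The blocks of `β` that are not to the left of `x.1` lie in `[x.1.1, β.length]`.
  have h1 : ∑ y ∈ S \ A, mass y.1 ≤ β.length - x.1.1 := by
    rw [← Finset.sum_image (f := mass)
      (h.corr.injOn_fst.mono (Finset.coe_subset.2 Finset.sdiff_subset))]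
    refine sum_mass_le (β := β) (hpos.le.trans (β.blocks_sub _ hxb.1).2) ?_
    simp only [Finset.forall_mem_image]
    intro y hy
    obtain ⟨hyS, hyA⟩ := Finset.mem_sdiff.1 hy
    have hyb := (h.corr.1 y hyS).1
    refine ⟨hyb, ?_, (β.blocks_sub _ hyb).2⟩
    by_cases e : y = x
    · rw [e]
    · rcases h.corr.2 y hyS x hx e with o | o
      · exact absurd (by simp [hA, hyS, o.1]) hyA
      · linarith [o.1]
  have h2 : ∑ y ∈ A, mass y.2 ≤ x.2.1 - 0 := by
    rw [← Finset.sum_image (f := mass) (h.corr.injOn_snd.mono (Finset.coe_subset.2 hAS))]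
    refine sum_mass_le (β := γ) (γ.blocks_sub _ hxb.2).1 ?_
    simp only [Finset.forall_mem_image]
    intro y hy
    have hyS := hAS hy
    have hyx : y.1.2 ≤ x.1.1 := (Finset.mem_filter.1 hy).2
    have hyb := h.corr.1 y hyS
    have hlt := β.blocks_lt _ hyb.1
    refine ⟨hyb.2, (γ.blocks_sub _ hyb.2).1, ?_⟩
    rcases h.corr.2 y hyS x hx (fun e => by rw [e] at hyx; linarith) with o | o
    · exact o.2
    · linarith [o.1]
  have h3 : ∑ y ∈ A, mass y.1 ≤ ∑ y ∈ S, |mass y.1 - mass y.2| + ∑ y ∈ A, mass y.2 := by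
    have h4 : ∑ y ∈ A, |mass y.1 - mass y.2| ≤ ∑ y ∈ S, |mass y.1 - mass y.2| :=
      Finset.sum_le_sum_of_subset_of_nonneg hAS (fun _ _ _ => abs_nonneg _)
    have h5 : ∑ y ∈ A, mass y.1 ≤ ∑ y ∈ A, |mass y.1 - mass y.2| + ∑ y ∈ A, mass y.2 := by
      rw [← Finset.sum_add_distrib]
      exact Finset.sum_le_sum fun y _ => by linarith [le_abs_self (mass y.1 - mass y.2)]
    linarith
  have h6 := Finset.sum_sdiff (f := fun y => mass y.1) hAS
  linarith [h.left]

lemma Close.abs_mass_le {a r : ℝ} {β γ : IntervalPartition}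
    {S : Finset ((ℝ × ℝ) × (ℝ × ℝ))} (h : Close a β γ S r) {x : (ℝ × ℝ) × (ℝ × ℝ)}
    (hx : x ∈ S) : |mass x.1 - mass x.2| ≤ r := by
  have h1 := Finset.single_le_sum (f := fun y : (ℝ × ℝ) × (ℝ × ℝ) => |mass y.1 - mass y.2|)
    (fun _ _ => abs_nonneg _) hx
  have h2 : ∑ x ∈ S, mass x.1 ≤ β.length := by
    rw [← Finset.sum_image (f := mass) h.corr.injOn_fst]
    refine sum_mass_le_length ?_
    simp only [Finset.forall_mem_image]
    exact fun x hx => (h.corr.1 x hx).1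
  linarith [h.left]

/-- If `dA a β γ = 0`, each block of `β` has blocks of `γ` arbitrarily near it. -/
lemma exists_near {a : ℝ} {β γ : IntervalPartition} (h : dA a β γ = 0) {p : ℝ × ℝ}
    (hp : p ∈ β.blocks) {ε : ℝ} (hε : 0 < ε) :
    ∃ q ∈ γ.blocks, |p.1 - q.1| ≤ ε ∧ |p.2 - q.2| ≤ 2 * ε := by
  have hm := mass_pos hp
  have hr : dA a β γ < min ε (mass p / 2) := h ▸ lt_min hε (half_pos hm)
  obtain ⟨S, hS⟩ := exists_close hr
  obtain ⟨x, hx, rfl⟩ := hS.mem_of_mass hp ((min_le_right _ _).trans_lt (half_lt_self hm))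
  have h1 := hS.left_le hx
  have h2 := hS.swap.left_le (Finset.mem_image_of_mem Prod.swap hx)
  have h3 := abs_le.1 (hS.abs_mass_le hx)
  have h4 : min ε (mass x.1 / 2) ≤ ε := min_le_left _ _
  simp only [Prod.fst_swap, Prod.snd_swap] at h2
  simp only [mass] at h1 h2 h3 h4
  refine ⟨x.2, (hS.corr.1 x hx).2, abs_le.2 ⟨?_, ?_⟩, abs_le.2 ⟨?_, ?_⟩⟩ <;> linarith

lemma blocks_subset_of_dA {a : ℝ} {β γ : IntervalPartition} (h : dA a β γ = 0) :
    β.blocks ⊆ γ.blocks := by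
  intro p hp
  have hm : 0 < p.2 - p.1 := mass_pos hp
  obtain ⟨q, hq, hq1, hq2⟩ := exists_near h hp (ε := (p.2 - p.1) / 8) (by linarith)
  rw [abs_le] at hq1 hq2
  -- All blocks of `γ` near `p` contain the midpoint of `p`, hence coincide with `q`.
  have key : ∀ ε, 0 < ε → |p.1 - q.1| ≤ ε ∧ |p.2 - q.2| ≤ 2 * ε := by
    intro ε hε
    obtain ⟨q', hq', h1, h2⟩ := exists_near h hp (ε := min ε ((p.2 - p.1) / 8))
      (lt_min hε (by linarith))
    have m1 := min_le_left ε ((p.2 - p.1) / 8)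
    have m2 := min_le_right ε ((p.2 - p.1) / 8)
    have e : q = q' := by
      by_contra hne
      have h1' := abs_le.1 h1
      have h2' := abs_le.1 h2
      rcases blocks_order hq hq' hne with o | o <;> linarith
    rw [e]
    exact ⟨h1.trans m1, h2.trans (by linarith)⟩
  have e1 : |p.1 - q.1| ≤ 0 := le_of_forall_pos_le_add fun ε hε => by
    linarith [(key ε hε).1]
  have e2 : |p.2 - q.2| ≤ 0 := le_of_forall_pos_le_add fun ε hε => by
    linarith [(key (ε / 2) (half_pos hε)).2]
  have e : p = q := Prod.ext (sub_eq_zero.1 (abs_nonpos_iff.1 e1))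
    (sub_eq_zero.1 (abs_nonpos_iff.1 e2))
  rwa [e]

lemma length_le_of_dA {a : ℝ} {β γ : IntervalPartition} (h : dA a β γ = 0) :
    β.length ≤ γ.length :=
  le_of_forall_pos_le_add fun ε hε => by
    obtain ⟨S, hS⟩ := exists_close (h.trans_lt hε)
    exact hS.length_le

lemma dA_le_symm (a : ℝ) (β γ : IntervalPartition) : dA a γ β ≤ dA a β γ :=
  le_of_forall_gt_imp_ge_of_dense fun r hr => by
    obtain ⟨S, hS⟩ := exists_close hr
    exact hS.swap.dA_le

lemma dA_symm (a : ℝ) (β γ : IntervalPartition) : dA a β γ = dA a γ β :=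
  le_antisymm (dA_le_symm a γ β) (dA_le_symm a β γ)

lemma eq_of_dA {a : ℝ} {β γ : IntervalPartition} (h : dA a β γ = 0) : β = γ := by
  have h' : dA a γ β = 0 := dA_symm a γ β ▸ h
  have hl := le_antisymm (length_le_of_dA h) (length_le_of_dA h')
  have hb := Set.Subset.antisymm (blocks_subset_of_dA h) (blocks_subset_of_dA h')
  cases β
  cases γ
  simp only at hl hb
  subst hl hb
  rfl

lemma dA_triangle (a : ℝ) (β γ η : IntervalPartition) :
    dA a β γ ≤ dA a β η + dA a η γ := by
  refine le_of_forall_pos_le_add fun ε hε => ?_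
  obtain ⟨S, hS⟩ := exists_close (lt_add_of_pos_right (dA a β η) (half_pos hε))
  obtain ⟨S', hS'⟩ := exists_close (lt_add_of_pos_right (dA a η γ) (half_pos hε))
  obtain ⟨R, hR⟩ := hS.comp hS'
  linarith [hR.dA_le]

end IntervalPartition

open IntervalPartition in
/-- `d_α` is a metric on `I_α`: nonnegative, symmetric, vanishing
precisely when the two interval partitions are equal, and satisfying the
triangle inequality. -/
theorem dA_is_metric (a : ℝ) (ha : 0 < a) (ha' : a < 1) :
    (∀ β γ : IntervalPartition, HasDiversityProp a β → HasDiversityProp a γ →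
      0 ≤ dA a β γ) ∧
    (∀ β γ : IntervalPartition, HasDiversityProp a β → HasDiversityProp a γ →
      dA a β γ = dA a γ β) ∧
    (∀ β γ : IntervalPartition, HasDiversityProp a β → HasDiversityProp a γ →
      (dA a β γ = 0 ↔ β = γ)) ∧
    (∀ β γ η : IntervalPartition, HasDiversityProp a β → HasDiversityProp a γ →
      HasDiversityProp a η → dA a β γ ≤ dA a β η + dA a η γ) := by
  exact ⟨fun β γ _ _ => dA_nonneg a β γ, fun β γ _ _ => dA_symm a β γ,
    fun β γ _ _ => ⟨eq_of_dA, fun h => h ▸ dA_self a β⟩,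
    fun β γ η _ _ _ => dA_triangle a β γ η⟩
end

section
/- The metrics d_H and d_H' generate the same topology on I_H. Quantitatively: d_H(β,γ) ≤ 3·d_H'(β,γ) for all β,γ∈I_H, and for every β∈I_H and every ε>0 there exists δ>0 such that every γ∈I_H with d_H(β,γ)<δ satisfies d_H'(β,γ)<ε. -/
/-!
*`d_H ≤ d_H'`* (`dH_le_dHp`; the constant `3` is not needed). Fix a correspondence `(U_j, V_j)` with
distortion `D`. A point `x ∈ C_β` lies in no `U_j`, so it splits the indices into
`A = {j | U_j is left of x}` and its complement. Let `y` be the right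
endpoint of the last `V_j` with `j ∈ A` (or `0` if `A` is empty); it lies in `C_γ` and splits the
`V_j` in the same way. Then `x - ∑_A |U_j|` lies between `0` and the unmatched mass of `β`, and
`y - ∑_A |V_j|` between `0` and the unmatched mass of `γ`, because ordered intervals inside `[s, t]`
have total length at most `t - s` (`sum_mass_le`, `sub_sum_bounds`). Hence `|x - y| ≤ D`.

*Continuity of `d_H'` with respect to `d_H`* (`exists_delta`). Choose finitely many blocks `U_j` of
`β` that carry all but a small part of its mass, and `δ` small relative to their masses and number.
If `d_H(β, γ) < δ`, then each `U_j` has a matching block `V_j` of `γ`, the one containing the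
midpoint of `U_j`, and the endpoints of `U_j` and `V_j` differ by at most `δ` (`exists_block_near`).
As the total lengths also differ by at most `δ`, this correspondence has small distortion.
-/

open MeasureTheory Filter Topology Set

namespace IntervalPartition

/-! ### Blocks and complements -/

/-- Of two distinct blocks, one lies to the left of the other. -/
lemma block_order (β : IntervalPartition) {p q : ℝ × ℝ} (hp : p ∈ β.blocks) (hq : q ∈ β.blocks)
    (hpq : p ≠ q) : p.2 ≤ q.1 ∨ q.2 ≤ p.1 := by
  have h := β.blocks_disjoint p hp q hq hpq
  have h1 := β.blocks_lt p hp
  have h2 := β.blocks_lt q hq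
  rw [Set.Ioo_inter_Ioo, Set.Ioo_eq_empty_iff] at h
  by_contra! hc
  exact h (max_lt (lt_min h1 hc.2) (lt_min hc.1 h2))

lemma mem_cset {β : IntervalPartition} {x : ℝ} :
    x ∈ β.cset ↔ (0 ≤ x ∧ x ≤ β.length) ∧ ∀ p ∈ β.blocks, x ≤ p.1 ∨ p.2 ≤ x := by
  simp only [cset, Set.mem_sdiff, Set.mem_Icc, Set.mem_iUnion, Set.mem_Ioo, not_exists, not_and]
  refine and_congr_right fun _ => forall₂_congr fun p _ => ?_
  rw [← not_lt, ← not_lt]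
  tauto

lemma zero_mem_cset (β : IntervalPartition) : 0 ∈ β.cset :=
  mem_cset.2 ⟨⟨le_rfl, β.length_nonneg⟩, fun p hp => Or.inl (β.blocks_sub p hp).1⟩

lemma length_mem_cset (β : IntervalPartition) : β.length ∈ β.cset :=
  mem_cset.2 ⟨⟨β.length_nonneg, le_rfl⟩, fun p hp => Or.inr (β.blocks_sub p hp).2⟩

lemma left_mem_cset (β : IntervalPartition) {p : ℝ × ℝ} (hp : p ∈ β.blocks) : p.1 ∈ β.cset := by
  have h := β.blocks_sub p hp
  have hlt := β.blocks_lt p hp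
  refine mem_cset.2 ⟨⟨h.1, by linarith⟩, fun q hq => ?_⟩
  rcases eq_or_ne p q with rfl | hne
  · exact Or.inl le_rfl
  · rcases β.block_order hp hq hne with h | h
    · exact Or.inl (by linarith)
    · exact Or.inr h

lemma right_mem_cset (β : IntervalPartition) {p : ℝ × ℝ} (hp : p ∈ β.blocks) : p.2 ∈ β.cset := by
  have h := β.blocks_sub p hp
  have hlt := β.blocks_lt p hp
  refine mem_cset.2 ⟨⟨by linarith, h.2⟩, fun q hq => ?_⟩
  rcases eq_or_ne p q with rfl | hne
  · exact Or.inr le_rfl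
  · rcases β.block_order hp hq hne with h | h
    · exact Or.inl h
    · exact Or.inr (by linarith)

lemma hausdorffEDist_cset_ne_top (β γ : IntervalPartition) :
    Metric.hausdorffEDist β.cset γ.cset ≠ ⊤ :=
  Metric.hausdorffEDist_ne_top_of_nonempty_of_bounded ⟨0, β.zero_mem_cset⟩ ⟨0, γ.zero_mem_cset⟩
    ((Metric.isBounded_Icc 0 β.length).subset Set.sdiff_subset)
    ((Metric.isBounded_Icc 0 γ.length).subset Set.sdiff_subset)

/-! ### Uncovered mass and the bound of `dH` by `dHp` -/

/-- Finitely many ordered intervals inside `[s, t]` have total mass at most `t - s`. -/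
lemma sum_mass_le_s2 {ι : Type*} [LinearOrder ι] (u : ι → ℝ × ℝ)
    (hord : ∀ j k, j < k → (u j).2 ≤ (u k).1) (A : Finset ι) (s : ℝ)
    (hs : ∀ j ∈ A, s ≤ (u j).1) :
    ∀ t, s ≤ t → (∀ j ∈ A, (u j).2 ≤ t) → ∑ j ∈ A, mass (u j) ≤ t - s := by
  induction A using Finset.induction_on_max with
  | empty => intro t hst _; simpa using hst
  | insert m A hm ih =>
    intro t hst ht
    rw [Finset.sum_insert fun h => lt_irrefl _ (hm m h)]
    have h1 := ih (fun j hj => hs j (Finset.mem_insert_of_mem hj)) (u m).1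
      (hs m (Finset.mem_insert_self _ _)) (fun j hj => hord j m (hm j hj))
    have h2 := ht m (Finset.mem_insert_self _ _)
    simp only [mass] at *
    linarith

lemma IsCorrespondence.symm {β γ : IntervalPartition} {n : ℕ} {c : Fin n → (ℝ × ℝ) × (ℝ × ℝ)}
    (h : IsCorrespondence β γ n c) : IsCorrespondence γ β n fun j => (c j).swap :=
  ⟨fun j => (h.1 j).symm, fun j k hjk => (h.2 j k hjk).symm⟩

lemma hausDistortion_swap (β γ : IntervalPartition) (n : ℕ) (c : Fin n → (ℝ × ℝ) × (ℝ × ℝ)) :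
    hausDistortion γ β n (fun j => (c j).swap) = hausDistortion β γ n c := by
  simp only [hausDistortion, Prod.fst_swap, Prod.snd_swap]
  rw [max_comm]
  simp only [abs_sub_comm]

/-- If `x` separates the ordered blocks `u j`, `j ∈ A`, from the remaining ones, then the part of
`[0, x]` not covered by these blocks has length between `0` and the total uncovered mass. -/
lemma sub_sum_bounds (β : IntervalPartition) {n : ℕ} (u : Fin n → ℝ × ℝ)
    (hu : ∀ j, u j ∈ β.blocks) (hord : ∀ j k, j < k → (u j).2 ≤ (u k).1) (A : Finset (Fin n))
    {x : ℝ} (hx0 : 0 ≤ x) (hxL : x ≤ β.length) (hA : ∀ j ∈ A, (u j).2 ≤ x)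
    (hAc : ∀ j ∉ A, x ≤ (u j).1) :
    0 ≤ x - ∑ j ∈ A, mass (u j) ∧
      x - ∑ j ∈ A, mass (u j) ≤ β.length - ∑ j, mass (u j) := by
  have h1 := sum_mass_le_s2 u hord A 0 (fun j _ => (β.blocks_sub _ (hu j)).1) x hx0 hA
  have h2 := sum_mass_le_s2 u hord Aᶜ x (fun j hj => hAc j (by simpa using hj)) β.length hxL
    (fun j _ => (β.blocks_sub _ (hu j)).2)
  have h3 := Finset.sum_add_sum_compl A (fun j => mass (u j))
  constructor <;> linarith

lemma hausDistortion_nonneg {β γ : IntervalPartition} {n : ℕ} {c : Fin n → (ℝ × ℝ) × (ℝ × ℝ)}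
    (h : IsCorrespondence β γ n c) : 0 ≤ hausDistortion β γ n c := by
  refine le_trans ?_ (le_max_left _ _)
  have h1 := sum_mass_le_s2 (fun j => (c j).1) (fun j k hjk => (h.2 j k hjk).1) Finset.univ 0
    (fun j _ => (β.blocks_sub _ (h.1 j).1).1) β.length β.length_nonneg
    (fun j _ => (β.blocks_sub _ (h.1 j).1).2)
  have h2 : 0 ≤ ∑ j, |mass (c j).1 - mass (c j).2| := Finset.sum_nonneg fun _ _ => abs_nonneg _
  linarith

/-- Every point of `C_β` is within the distortion of a correspondence from a point of `C_γ`. -/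
lemma exists_near_of_correspondence {β γ : IntervalPartition} {n : ℕ}
    {c : Fin n → (ℝ × ℝ) × (ℝ × ℝ)} (h : IsCorrespondence β γ n c) {x : ℝ} (hx : x ∈ β.cset) :
    ∃ y ∈ γ.cset, dist x y ≤ hausDistortion β γ n c := by
  classical
  obtain ⟨⟨hx0, hxL⟩, hxb⟩ := mem_cset.1 hx
  set A : Finset (Fin n) := Finset.univ.filter fun j => (c j).1.2 ≤ x with hAdef
  have hA : ∀ j ∈ A, (c j).1.2 ≤ x := fun j hj => (Finset.mem_filter.1 hj).2
  have hAc : ∀ j ∉ A, x ≤ (c j).1.1 := fun j hj =>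
    (hxb _ (h.1 j).1).resolve_right fun h' => hj (Finset.mem_filter.2 ⟨Finset.mem_univ _, h'⟩)
  have hsep : ∀ j ∈ A, ∀ k ∉ A, j < k := by
    intro j hj k hk
    by_contra! hkj
    rcases hkj.eq_or_lt with rfl | hlt
    · exact hk hj
    · have h1 := (h.2 k j hlt).1
      have h2 := hA j hj
      have h3 := hAc k hk
      have h4 := β.blocks_lt _ (h.1 k).1
      have h5 := β.blocks_lt _ (h.1 j).1
      linarith
  obtain ⟨y, hy, hyA, hyAc⟩ : ∃ y ∈ γ.cset, (∀ j ∈ A, (c j).2.2 ≤ y) ∧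
      ∀ j ∉ A, y ≤ (c j).2.1 := by
    rcases A.eq_empty_or_nonempty with hE | hne
    · exact ⟨0, γ.zero_mem_cset, by simp [hE], fun j _ => (γ.blocks_sub _ (h.1 j).2).1⟩
    · have hm := A.max'_mem hne
      refine ⟨(c (A.max' hne)).2.2, γ.right_mem_cset (h.1 _).2, fun j hj => ?_,
        fun j hj => (h.2 _ _ (hsep _ hm _ hj)).2⟩
      rcases (A.le_max' j hj).eq_or_lt with he | hlt
      · rw [← he]
      · have h1 := (h.2 _ _ hlt).2
        have h2 := γ.blocks_lt _ (h.1 (A.max' hne)).2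
        linarith
  refine ⟨y, hy, ?_⟩
  obtain ⟨⟨hy0, hyL⟩, -⟩ := mem_cset.1 hy
  obtain ⟨b1, b2⟩ := β.sub_sum_bounds (fun j => (c j).1) (fun j => (h.1 j).1)
    (fun j k hjk => (h.2 j k hjk).1) A hx0 hxL hA hAc
  obtain ⟨g1, g2⟩ := γ.sub_sum_bounds (fun j => (c j).2) (fun j => (h.1 j).2)
    (fun j k hjk => (h.2 j k hjk).2) A hy0 hyL hyA hyAc
  have hS : |∑ j ∈ A, mass (c j).1 - ∑ j ∈ A, mass (c j).2|
      ≤ ∑ j, |mass (c j).1 - mass (c j).2| := by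
    rw [← Finset.sum_sub_distrib]
    exact (Finset.abs_sum_le_sum_abs _ _).trans
      (Finset.sum_le_sum_of_subset_of_nonneg (Finset.subset_univ _) fun _ _ _ => abs_nonneg _)
  obtain ⟨s1, s2⟩ := abs_le.1 hS
  have m1 : _ ≤ hausDistortion β γ n c := le_max_left _ _
  have m2 : _ ≤ hausDistortion β γ n c := le_max_right _ _
  rw [Real.dist_eq, abs_le]
  constructor <;> linarith

lemma dH_le_dHp (β γ : IntervalPartition) : dH β γ ≤ dHp β γ := by
  refine le_csInf ⟨_, 0, Fin.elim0, ⟨fun j => j.elim0, fun j => j.elim0⟩, rfl⟩ ?_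
  rintro _ ⟨n, c, h, rfl⟩
  refine Metric.hausdorffDist_le_of_mem_dist (hausDistortion_nonneg h)
    (fun x hx => exists_near_of_correspondence h hx) fun x hx => ?_
  have := exists_near_of_correspondence h.symm hx
  rwa [hausDistortion_swap] at this

lemma dHp_le_hausDistortion {β γ : IntervalPartition} {n : ℕ} {c : Fin n → (ℝ × ℝ) × (ℝ × ℝ)}
    (h : IsCorrespondence β γ n c) : dHp β γ ≤ hausDistortion β γ n c :=
  csInf_le ⟨0, by rintro _ ⟨n, c, h, rfl⟩; exact hausDistortion_nonneg h⟩ ⟨n, c, h, rfl⟩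

/-! ### Finite approximation of a partition by its blocks -/

/-- Finitely many blocks carry all but an arbitrarily small part of the mass. -/
lemma exists_finset_blocks (β : IntervalPartition) {η : ℝ} (hη : 0 < η) :
    ∃ s : Finset (ℝ × ℝ), (∀ p ∈ s, p ∈ β.blocks) ∧ β.length - η < ∑ p ∈ s, mass p := by
  by_cases hL : β.length - η < 0
  · exact ⟨∅, by simp, by simpa using hL⟩
  push Not at hL
  have hdisj : β.blocks.PairwiseDisjoint fun p => Set.Ioo p.1 p.2 := fun p hp q hq hne =>
    Set.disjoint_iff_inter_eq_empty.2 (β.blocks_disjoint p hp q hq hne)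
  have hcount : β.blocks.Countable := hdisj.countable_of_isOpen (fun p _ => isOpen_Ioo)
    fun p hp => Set.nonempty_Ioo.2 (β.blocks_lt p hp)
  have hle : ENNReal.ofReal β.length ≤ ∑' p : β.blocks, ENNReal.ofReal (mass p) := by
    have h1 : volume (Set.Icc 0 β.length) ≤ volume (⋃ p ∈ β.blocks, Set.Ioo p.1 p.2) :=
      measure_mono_ae (ae_le_set.2 β.compl_null)
    rw [measure_biUnion hcount hdisj fun p _ => measurableSet_Ioo] at h1
    simpa [mass] using h1
  have hlt : ENNReal.ofReal (β.length - η) < ∑' p : β.blocks, ENNReal.ofReal (mass p) :=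
    ((ENNReal.ofReal_lt_ofReal_iff (by linarith)).2 (by linarith)).trans_le hle
  rw [ENNReal.tsum_eq_iSup_sum, lt_iSup_iff] at hlt
  obtain ⟨s, hs⟩ := hlt
  have hpos : ∀ p : β.blocks, 0 ≤ mass p := fun p => sub_nonneg.2 (β.blocks_lt p p.2).le
  rw [← ENNReal.ofReal_sum_of_nonneg fun p _ => hpos p] at hs
  refine ⟨s.map (Function.Embedding.subtype _), ?_, ?_⟩
  · intro p hp
    obtain ⟨q, -, rfl⟩ := Finset.mem_map.1 hp
    exact q.2
  · rw [Finset.sum_map]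
    exact (ENNReal.ofReal_lt_ofReal_iff_of_nonneg hL).1 hs

/-- The finitely many blocks of `exists_finset_blocks`, listed from left to right. -/
lemma exists_ordered_blocks (β : IntervalPartition) {η : ℝ} (hη : 0 < η) :
    ∃ (n : ℕ) (u : Fin n → ℝ × ℝ), (∀ j, u j ∈ β.blocks) ∧
      (∀ j k, j < k → (u j).2 ≤ (u k).1) ∧ β.length - η < ∑ j, mass (u j) := by
  obtain ⟨s, hs, hsum⟩ := β.exists_finset_blocks hη
  -- The lexicographic order on endpoint pairs restricts to the left-to-right order on blocks.
  set s' : Finset (ℝ ×ₗ ℝ) := s.map toLex.toEmbedding with hs'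
  set e := s'.orderEmbOfFin rfl with he
  have hmem : ∀ j, ofLex (e j) ∈ β.blocks := fun j => by
    have h := s'.orderEmbOfFin_mem rfl j
    obtain ⟨p, hp, hpe⟩ := Finset.mem_map.1 h
    have : ofLex (e j) = p := by rw [he, ← hpe]; rfl
    rw [this]
    exact hs p hp
  refine ⟨s'.card, fun j => ofLex (e j), hmem, fun j k hjk => ?_, ?_⟩
  · have hlt : e j < e k := e.strictMono hjk
    have hne : ofLex (e j) ≠ ofLex (e k) := fun h => hlt.ne (ofLex.injective h)
    have h1 : (ofLex (e j)).1 ≤ (ofLex (e k)).1 := by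
      rcases Prod.Lex.lt_iff.1 hlt with h | h
      · exact h.le
      · exact h.1.le
    refine (β.block_order (hmem j) (hmem k) hne).resolve_right fun h => ?_
    have := β.blocks_lt _ (hmem k)
    linarith
  · have h1 : ∑ j, mass (ofLex (e j)) = ∑ p ∈ s', mass (ofLex p) := by
      conv_rhs => rw [← s'.map_orderEmbOfFin_univ rfl, Finset.sum_map]
      rfl
    have h2 : ∑ p ∈ s', mass (ofLex p) = ∑ p ∈ s, mass p := by
      rw [hs', Finset.sum_map]
      rfl
    rw [h1, h2]
    exact hsum

/-! ### Matching blocks of nearby partitions -/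

lemma exists_near_left {β γ : IntervalPartition} {δ : ℝ} (h : dH β γ < δ) {x : ℝ}
    (hx : x ∈ β.cset) : ∃ y ∈ γ.cset, x - δ < y ∧ y < x + δ := by
  obtain ⟨y, hy, hxy⟩ := Metric.exists_dist_lt_of_hausdorffDist_lt hx h
    (hausdorffEDist_cset_ne_top β γ)
  rw [Real.dist_eq, abs_lt] at hxy
  exact ⟨y, hy, by linarith, by linarith⟩

lemma dH_comm (β γ : IntervalPartition) : dH β γ = dH γ β := Metric.hausdorffDist_comm

/-- A block of `β` that is large compared to a bound `δ` on `d_H(β, γ)` has its midpoint in a block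
of `γ` with almost the same endpoints. -/
lemma exists_block_near {β γ : IntervalPartition} {δ : ℝ} (h : dH β γ < δ) {p : ℝ × ℝ}
    (hp : p ∈ β.blocks) (hδ : 4 * δ < mass p) :
    ∃ q ∈ γ.blocks, q.1 < (p.1 + p.2) / 2 ∧ (p.1 + p.2) / 2 < q.2 ∧
      |q.1 - p.1| ≤ δ ∧ |q.2 - p.2| ≤ δ := by
  have hδ0 : 0 < δ := lt_of_le_of_lt Metric.hausdorffDist_nonneg h
  simp only [mass] at hδ
  -- `C_γ` does not meet the interval `[p.1 + δ, p.2 - δ]`.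
  have hgap : ∀ z ∈ γ.cset, z < p.1 + δ ∨ p.2 - δ < z := by
    intro z hz
    obtain ⟨y, hy, h1, h2⟩ := exists_near_left (dH_comm β γ ▸ h) hz
    rcases (mem_cset.1 hy).2 p hp with h' | h'
    · left; linarith
    · right; linarith
  obtain ⟨a, ha, ha1, ha2⟩ := exists_near_left h (β.left_mem_cset hp)
  obtain ⟨b, hb, hb1, hb2⟩ := exists_near_left h (β.right_mem_cset hp)
  have ha' := mem_cset.1 ha
  have hb' := mem_cset.1 hb
  have hmid : (p.1 + p.2) / 2 ∉ γ.cset := fun hm => by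
    rcases hgap _ hm with h' | h' <;> linarith
  obtain ⟨q, hq, hq1, hq2⟩ : ∃ q ∈ γ.blocks, q.1 < (p.1 + p.2) / 2 ∧ (p.1 + p.2) / 2 < q.2 := by
    by_contra! hc
    refine hmid (mem_cset.2 ⟨⟨by linarith [ha'.1.1], by linarith [hb'.1.2]⟩, fun q hq => ?_⟩)
    by_contra! hc'
    exact absurd (hc q hq hc'.1) (not_le.2 hc'.2)
  have e1 : q.1 < p.1 + δ := (hgap _ (γ.left_mem_cset hq)).resolve_right (by linarith)
  have e2 : p.2 - δ < q.2 := (hgap _ (γ.right_mem_cset hq)).resolve_left (by linarith)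
  have e3 : a ≤ q.1 := (ha'.2 q hq).resolve_right (by linarith)
  have e4 : q.2 ≤ b := (hb'.2 q hq).resolve_left (by linarith)
  exact ⟨q, hq, hq1, hq2, abs_le.2 ⟨by linarith, by linarith⟩, abs_le.2 ⟨by linarith, by linarith⟩⟩

lemma length_le_of_dH_lt {β γ : IntervalPartition} {δ : ℝ} (h : dH β γ < δ) :
    γ.length ≤ β.length + δ := by
  obtain ⟨y, hy, h1, -⟩ := exists_near_left (dH_comm β γ ▸ h) γ.length_mem_cset
  linarith [(mem_cset.1 hy).1.2]

lemma exists_delta (β : IntervalPartition) {ε : ℝ} (hε : 0 < ε) :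
    ∃ δ : ℝ, 0 < δ ∧ ∀ γ : IntervalPartition, dH β γ < δ → dHp β γ < ε := by
  obtain ⟨n, u, hu, hord, hsum⟩ := β.exists_ordered_blocks (half_pos hε)
  have hpos : ∀ j, 0 < mass (u j) := fun j => sub_pos.2 (β.blocks_lt _ (hu j))
  obtain ⟨δ, ⟨hδm, hδε⟩, hδ⟩ : ∃ δ : ℝ,
      ((∀ j, 4 * δ < mass (u j)) ∧ (4 * n + 1) * δ < ε / 2) ∧ 0 < δ := by
    have h1 : ∀ᶠ δ : ℝ in 𝓝 0, ∀ j, 4 * δ < mass (u j) := by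
      refine eventually_all.2 fun j => ?_
      have : Tendsto (fun δ : ℝ => 4 * δ) (𝓝 0) (𝓝 (4 * 0)) := tendsto_id.const_mul 4
      exact this.eventually_lt_const (by simpa using hpos j)
    have h2 : ∀ᶠ δ : ℝ in 𝓝 0, (4 * n + 1) * δ < ε / 2 := by
      have : Tendsto (fun δ : ℝ => (4 * n + 1) * δ) (𝓝 0) (𝓝 ((4 * n + 1) * 0)) :=
        tendsto_id.const_mul _
      exact this.eventually_lt_const (by simpa using hε)
    exact (((h1.and h2).filter_mono nhdsWithin_le_nhds).and
      (self_mem_nhdsWithin : ∀ᶠ δ : ℝ in 𝓝[>] 0, 0 < δ)).exists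
  refine ⟨δ, hδ, fun γ hγ => ?_⟩
  choose v hv hv1 hv2 hva hvb using fun j => exists_block_near hγ (hu j) (hδm j)
  have hc : IsCorrespondence β γ n fun j => (u j, v j) := by
    refine ⟨fun j => ⟨hu j, hv j⟩, fun j k hjk => ⟨hord j k hjk, ?_⟩⟩
    have a1 := hord j k hjk
    have a2 := hδm k
    have a3 := hpos j
    have a4 := abs_le.1 (hvb j)
    have b2 := hv2 k
    have b3 := hv1 j
    simp only [mass] at a2 a3
    -- The midpoint of `u k` lies to the right of `v j`, hence `v j ≠ v k`.
    have hr : (v j).2 < ((u k).1 + (u k).2) / 2 := by linarith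
    have hne : v j ≠ v k := fun he => by rw [he] at hr; linarith
    refine (γ.block_order (hv j) (hv k) hne).resolve_right fun h => ?_
    linarith
  refine (dHp_le_hausDistortion hc).trans_lt ?_
  have hdiff : ∀ j, |mass (u j) - mass (v j)| ≤ 2 * δ := fun j => by
    have a1 := abs_le.1 (hva j)
    have a2 := abs_le.1 (hvb j)
    simp only [mass]
    exact abs_le.2 ⟨by linarith, by linarith⟩
  have hS : ∑ j, |mass (u j) - mass (v j)| ≤ n * (2 * δ) := by
    simpa using Finset.sum_le_sum fun j (_ : j ∈ Finset.univ) => hdiff j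
  have hT : |∑ j, mass (u j) - ∑ j, mass (v j)| ≤ ∑ j, |mass (u j) - mass (v j)| := by
    rw [← Finset.sum_sub_distrib]
    exact Finset.abs_sum_le_sum_abs _ _
  have hT' := (abs_le.1 hT).2
  have hlen := length_le_of_dH_lt hγ
  have hn : 0 ≤ (n : ℝ) * δ := by positivity
  simp only [hausDistortion]
  refine max_lt ?_ ?_ <;> linarith

end IntervalPartition

open IntervalPartition in
/-- `d_H` and `d_H'` generate the same topology on `I_H`:
`d_H ≤ 3 d_H'`, and for every `β` and `ε > 0` there is `δ > 0` such that
`d_H(β,γ) < δ` implies `d_H'(β,γ) < ε`. -/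
theorem dH_equiv_dHp :
    (∀ β γ : IntervalPartition, dH β γ ≤ 3 * dHp β γ) ∧
    (∀ β : IntervalPartition, ∀ ε : ℝ, 0 < ε → ∃ δ : ℝ, 0 < δ ∧
      ∀ γ : IntervalPartition, dH β γ < δ → dHp β γ < ε) := by
  refine ⟨fun β γ => ?_, fun β ε hε => exists_delta β hε⟩
  have h := dH_le_dHp β γ
  have h0 : 0 ≤ dH β γ := Metric.hausdorffDist_nonneg
  linarith
end
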